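/- arXiv:1908.04667 — 3 statements merged into one kernel-verified Lean document; each statement's English description precedes it below -/
import Mathlib

section
/- Let n ≥ 2, let γ₁ < γ₂ < ... < γₙ be real numbers and let r₁ < r₂ < ... < r_{n−1} be real numbers. Then there exist nonzero coefficients a₁, ..., aₙ with aᵢ·aᵢ₊₁ < 0 for every i = 1, ..., n−1 (alternating signs) such that the function φ(x) = Σᵢ aᵢ·e^{γᵢ x} satisfies: φ(rᵢ) = 0 for every i; φ(x) ≠ 0 for all x ∉ {r₁, ..., r_{n−1}}; and φ changes sign strictly at each rᵢ, i.e., φ has constant nonzero sign on each of the n open intervals determined by r₁ < ... < r_{n−1}, with opposite signs on adjacent intervals. -/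
open Finset

/-!
The coefficients are the cofactors of the first row of the collocation matrix of the `uₖ` at
`x, r₁, …, rₘ`, so that `∑ aₖ uₖ(x)` is its determinant. It vanishes at each `rᵢ`, where two rows
coincide, and elsewhere the number of `rᵢ` below `x` is the number of row exchanges that sort the
points; the positivity of all minors then gives both sign patterns.

For exponentials, Rolle's theorem shows that `∑ aₖ exp (γₖ x)` with `n` distinct exponents has at
most `n - 1` zeros, so no minor vanishes. The strictly increasing exponent tuples form a convex
set, hence all minors of a given size have the same sign at fixed points, and `γₖ = k` gives a
Vandermonde determinant.
-/

/-- The collocation matrix of a family `u` at the points `x`: rows are indexed by points, columns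
by functions. -/
def collocationMatrix {ι κ α R : Type*} (u : κ → α → R) (x : ι → α) : Matrix ι κ R :=
  Matrix.of fun i k => u k (x i)

/-- A Descartes system: every minor of the collocation matrices of `u`, of any size, at increasing
points and for an increasing choice of functions, is positive. -/
def IsDescartesSystem {κ α R : Type*} [Preorder κ] [Preorder α] [CommRing R] [Preorder R]
    (u : κ → α → R) : Prop :=
  ∀ ⦃n : ℕ⦄ ⦃c : Fin n → κ⦄ ⦃x : Fin n → α⦄, StrictMono c → StrictMono x →
    0 < (collocationMatrix (u ∘ c) x).det

section AlternatingMinor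

variable {α R : Type*} {m : ℕ}

theorem collocationMatrix_insertNth_submatrix (u : Fin (m + 1) → α → R) (r : Fin m → α)
    (p k : Fin (m + 1)) (x : α) :
    (collocationMatrix u (p.insertNth x r : Fin (m + 1) → α)).submatrix p.succAbove k.succAbove =
      collocationMatrix (u ∘ k.succAbove) r := by
  ext i j
  simp [collocationMatrix]

variable [CommRing R]

/-- The minor of the collocation matrix of `u₀, …, uₘ` at `r` that omits `uₖ`, with the sign
`(-1)ᵏ` of a cofactor in a first row added to that matrix. -/
def alternatingMinor (u : Fin (m + 1) → α → R) (r : Fin m → α) (k : Fin (m + 1)) : R :=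
  (-1) ^ (k : ℕ) * (collocationMatrix (u ∘ k.succAbove) r).det

theorem sum_alternatingMinor_mul (u : Fin (m + 1) → α → R) (r : Fin m → α) (p : Fin (m + 1))
    (x : α) :
    ∑ k, alternatingMinor u r k * u k x =
      (-1) ^ (p : ℕ) * (collocationMatrix u (p.insertNth x r : Fin (m + 1) → α)).det := by
  have sign_sq : (-1 : R) ^ (p : ℕ) * (-1) ^ (p : ℕ) = 1 := by
    rw [← mul_pow, neg_one_mul, neg_neg, one_pow]
  rw [Matrix.det_succ_row _ p, mul_sum]
  refine sum_congr rfl fun k _ => ?_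
  rw [collocationMatrix_insertNth_submatrix, collocationMatrix, Matrix.of_apply,
    Fin.insertNth_apply_same, alternatingMinor, pow_add]
  linear_combination
    -(-1) ^ (k : ℕ) * (collocationMatrix (u ∘ k.succAbove) r).det * u k x * sign_sq

theorem sum_alternatingMinor_mul_apply_node (u : Fin (m + 1) → α → R) (r : Fin m → α)
    (i : Fin m) : ∑ k, alternatingMinor u r k * u k (r i) = 0 := by
  rw [sum_alternatingMinor_mul u r 0,
    Matrix.det_zero_of_row_eq (i := 0) (j := i.succ) (Fin.succ_ne_zero i).symm, mul_zero]
  ext k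
  simp [collocationMatrix]

end AlternatingMinor

theorem exists_strictMono_insertNth {α : Type*} [LinearOrder α] {m : ℕ} {r : Fin m → α}
    (hr : StrictMono r) {x : α} (hx : x ∉ Set.range r) :
    ∃ p : Fin (m + 1), (p : ℕ) = #{i | r i < x} ∧
      StrictMono (p.insertNth x r : Fin (m + 1) → α) := by
  have card_lt : #{i | r i < x} < m + 1 := Nat.lt_succ_of_le (card_finset_fin_le _)
  have lt_card_iff (i : Fin m) : (i : ℕ) < #{i | r i < x} ↔ r i < x :=
    Tuple.lt_card_lt_iff_apply_lt_of_monotone hr.monotone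
  refine ⟨⟨_, card_lt⟩, rfl, (Fin.strictMono_insertNth_iff _ x r).2
    ⟨hr, fun i hi => (lt_card_iff i).1 hi, fun i hi => ?_⟩⟩
  have not_lt_x : ¬ r i < x := (lt_card_iff i).not.1 (not_lt.2 hi)
  exact (not_lt.1 not_lt_x).lt_of_ne fun h => hx ⟨i, h.symm⟩

namespace IsDescartesSystem

variable {α R : Type*} [LinearOrder α] [CommRing R] [PartialOrder R]
  {m : ℕ} {u : Fin (m + 1) → α → R} {r : Fin m → α}

theorem neg_one_pow_card_mul_sum_alternatingMinor_mul_pos (hu : IsDescartesSystem u)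
    (hr : StrictMono r) {x : α} (hx : x ∉ Set.range r) :
    0 < (-1) ^ #{i | r i < x} * ∑ k, alternatingMinor u r k * u k x := by
  obtain ⟨p, hp, hmono⟩ := exists_strictMono_insertNth hr hx
  rw [sum_alternatingMinor_mul u r p, hp, ← mul_assoc, ← mul_pow, neg_one_mul, neg_neg, one_pow,
    one_mul]
  exact hu strictMono_id hmono

theorem alternatingMinor_ne_zero (hu : IsDescartesSystem u) (hr : StrictMono r)
    (k : Fin (m + 1)) : alternatingMinor u r k ≠ 0 :=
  (isUnit_one.neg.pow (k : ℕ)).mul_right_eq_zero.not.2 (hu (Fin.strictMono_succAbove k) hr).ne'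

variable [IsStrictOrderedRing R]

theorem alternatingMinor_mul_neg (hu : IsDescartesSystem u) (hr : StrictMono r)
    {k l : Fin (m + 1)} (hkl : (l : ℕ) = k + 1) :
    alternatingMinor u r k * alternatingMinor u r l < 0 := by
  have sign_mul : (-1 : R) ^ (k : ℕ) * (-1) ^ (l : ℕ) = -1 := by
    rw [← pow_add, hkl, Odd.neg_one_pow ⟨k, by ring⟩]
  rw [alternatingMinor, alternatingMinor, mul_mul_mul_comm, sign_mul, neg_one_mul, neg_lt_zero]
  exact mul_pos (hu (Fin.strictMono_succAbove k) hr) (hu (Fin.strictMono_succAbove l) hr)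

end IsDescartesSystem

theorem descartes_interpolation_general {α R : Type*} [LinearOrder α] [CommRing R] [PartialOrder R]
    [IsStrictOrderedRing R] {m : ℕ} {u : Fin (m + 1) → α → R} (hu : IsDescartesSystem u)
    {r : Fin m → α} (hr : StrictMono r) :
    ∃ a : Fin (m + 1) → R,
      (∀ i, a i ≠ 0) ∧
      (∀ i j : Fin (m + 1), (j : ℕ) = (i : ℕ) + 1 → a i * a j < 0) ∧
      (∀ i : Fin m, ∑ k, a k * u k (r i) = 0) ∧
      ∀ x ∉ Set.range r, 0 < (-1) ^ #{i | r i < x} * ∑ k, a k * u k x :=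
  ⟨alternatingMinor u r, hu.alternatingMinor_ne_zero hr,
    fun _ _ => hu.alternatingMinor_mul_neg hr, sum_alternatingMinor_mul_apply_node u r,
    fun _ => hu.neg_one_pow_card_mul_sum_alternatingMinor_mul_pos hr⟩

theorem exists_strictMono_deriv_eq_zero {m : ℕ} {f : ℝ → ℝ} {x : Fin (m + 1) → ℝ} {c : ℝ}
    (hf : Continuous f) (hx : StrictMono x) (hfx : ∀ i, f (x i) = c) :
    ∃ y : Fin m → ℝ, StrictMono y ∧ ∀ i, deriv f (y i) = 0 := by
  have rolle (i : Fin m) : ∃ y ∈ Set.Ioo (x i.castSucc) (x i.succ), deriv f y = 0 :=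
    exists_deriv_eq_zero (hx i.castSucc_lt_succ) hf.continuousOn ((hfx _).trans (hfx _).symm)
  choose y hy hy_deriv using rolle
  refine ⟨y, fun i j hij => ?_, hy_deriv⟩
  calc y i < x i.succ := (hy i).2
    _ ≤ x j.castSucc := hx.monotone (Fin.succ_le_castSucc_iff.2 hij)
    _ < y j := (hy j).1

section ExponentialSum

variable {ι : Type*} [Fintype ι] (γ a : ι → ℝ)

theorem hasDerivAt_sum_mul_exp (t : ℝ) :
    HasDerivAt (fun s => ∑ k, a k * Real.exp (γ k * s))
      (∑ k, a k * γ k * Real.exp (γ k * t)) t := by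
  refine HasDerivAt.fun_sum fun k _ => ?_
  exact (((hasDerivAt_id' t).const_mul (γ k)).exp.const_mul (a k)).congr_deriv (by ring)

theorem sum_mul_exp_sub_mul (c t : ℝ) :
    ∑ k, a k * Real.exp ((γ k - c) * t) = Real.exp (-c * t) * ∑ k, a k * Real.exp (γ k * t) := by
  rw [mul_sum]
  refine sum_congr rfl fun k _ => ?_
  rw [mul_left_comm, ← Real.exp_add]
  ring_nf

end ExponentialSum

theorem eq_zero_of_sum_mul_exp_eq_zero {n : ℕ} {γ x a : Fin n → ℝ} (hγ : Function.Injective γ)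
    (hx : StrictMono x) (h : ∀ i, ∑ k, a k * Real.exp (γ k * x i) = 0) : a = 0 := by
  induction n with
  | zero => exact Subsingleton.elim _ _
  | succ n ih =>
    -- Shifting the exponents by `γ 0` keeps the zeros, and then differentiation kills one term.
    let g : ℝ → ℝ := fun t => ∑ k, a k * Real.exp ((γ k - γ 0) * t)
    have g_deriv (t : ℝ) :
        HasDerivAt g (∑ k, a k * (γ k - γ 0) * Real.exp ((γ k - γ 0) * t)) t :=
      hasDerivAt_sum_mul_exp (fun k => γ k - γ 0) a t
    have g_cont : Continuous g := continuous_iff_continuousAt.2 fun t => (g_deriv t).continuousAt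
    have g_zero (i : Fin (n + 1)) : g (x i) = 0 := by
      simp only [g, sum_mul_exp_sub_mul, h, mul_zero]
    obtain ⟨y, hy, hy_deriv⟩ := exists_strictMono_deriv_eq_zero g_cont hx g_zero
    have shifted_injective : Function.Injective fun k : Fin n => γ k.succ - γ 0 :=
      (sub_left_injective.comp hγ).comp (Fin.succ_injective n)
    have scaled_eq_zero : (fun k : Fin n => a k.succ * (γ k.succ - γ 0)) = 0 := by
      refine ih shifted_injective hy fun i => ?_
      simpa [Fin.sum_univ_succ] using (g_deriv (y i)).deriv.symm.trans (hy_deriv i)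
    have tail_eq_zero (k : Fin n) : a k.succ = 0 :=
      (mul_eq_zero.1 (congrFun scaled_eq_zero k)).resolve_right
        (sub_ne_zero.2 (hγ.ne (Fin.succ_ne_zero k)))
    have head_eq_zero : a 0 = 0 := by
      simpa [Fin.sum_univ_succ, tail_eq_zero] using h 0
    exact funext (Fin.cases head_eq_zero tail_eq_zero)

theorem det_collocationMatrix_exp_ne_zero {n : ℕ} {γ x : Fin n → ℝ} (hγ : Function.Injective γ)
    (hx : StrictMono x) : (collocationMatrix (fun k t => Real.exp (γ k * t)) x).det ≠ 0 := by
  intro hdet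
  obtain ⟨a, ha, hker⟩ := Matrix.exists_mulVec_eq_zero_iff.2 hdet
  refine ha (eq_zero_of_sum_mul_exp_eq_zero hγ hx fun i => ?_)
  simpa only [collocationMatrix, Matrix.mulVec, dotProduct, Matrix.of_apply, Pi.zero_apply,
    mul_comm (Real.exp _)] using congrFun hker i

theorem det_vandermonde_pos {R : Type*} [CommRing R] [PartialOrder R] [IsStrictOrderedRing R]
    {n : ℕ} {v : Fin n → R} (hv : StrictMono v) : 0 < (Matrix.vandermonde v).det := by
  rw [Matrix.det_vandermonde]
  exact prod_pos fun i _ => prod_pos fun j hj => sub_pos.2 (hv (mem_Ioi.1 hj))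

theorem convex_setOf_strictMono (𝕜 : Type*) {ι E : Type*} [Semiring 𝕜] [LinearOrder 𝕜]
    [Preorder ι] [AddCommGroup E] [PartialOrder E] [IsOrderedAddMonoid E] [Module 𝕜 E]
    [PosSMulStrictMono 𝕜 E] : Convex 𝕜 {f : ι → E | StrictMono f} := by
  intro f hf g hg a b ha hb hab i j hij
  simp only [Pi.add_apply, Pi.smul_apply]
  obtain rfl | ha := ha.eq_or_lt
  · obtain rfl : b = 1 := by simpa using hab
    simpa using hg hij
  · exact add_lt_add_of_lt_of_le (smul_lt_smul_of_pos_left (hf hij) ha)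
      (smul_le_smul_of_nonneg_left (hg hij).le hb)

theorem det_collocationMatrix_exp_pos {n : ℕ} {γ x : Fin n → ℝ} (hγ : StrictMono γ)
    (hx : StrictMono x) : 0 < (collocationMatrix (fun k t => Real.exp (γ k * t)) x).det := by
  let D : (Fin n → ℝ) → ℝ := fun δ => (collocationMatrix (fun k t => Real.exp (δ k * t)) x).det
  have D_continuous : Continuous D := by
    refine Continuous.matrix_det (continuous_matrix fun i k => ?_)
    simp only [collocationMatrix, Matrix.of_apply]
    fun_prop
  have D_natCast_pos : 0 < D fun k => (k : ℕ) := by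
    have eq_vandermonde : collocationMatrix (fun (k : Fin n) t => Real.exp ((k : ℕ) * t)) x =
        Matrix.vandermonde fun i => Real.exp (x i) := by
      ext i k
      simp [collocationMatrix, Real.exp_nat_mul]
    simp only [D, eq_vandermonde]
    exact det_vandermonde_pos (Real.exp_strictMono.comp hx)
  have natCast_strictMono : StrictMono fun k : Fin n => ((k : ℕ) : ℝ) :=
    Nat.strictMono_cast.comp Fin.val_strictMono
  by_contra! D_nonpos
  obtain ⟨δ, hδ, D_zero⟩ := (convex_setOf_strictMono ℝ).isPreconnected.intermediate_value hγ
    natCast_strictMono D_continuous.continuousOn ⟨D_nonpos, D_natCast_pos.le⟩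
  exact det_collocationMatrix_exp_ne_zero hδ.injective hx D_zero

theorem isDescartesSystem_exp {κ : Type*} [Preorder κ] {γ : κ → ℝ} (hγ : StrictMono γ) :
    IsDescartesSystem fun k t => Real.exp (γ k * t) :=
  fun _ _ _ hc hx => det_collocationMatrix_exp_pos (hγ.comp hc) hx

/-- Interpolation with exponential Descartes systems: given `γ₁ < ... < γₙ` and
prescribed points `r₁ < ... < r_{n-1}`, there is an exponential polynomial
`φ(x) = Σ aᵢ e^{γᵢ x}` with alternating nonzero coefficients whose zeros are
exactly the `rᵢ`, each being a strict sign change. -/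
theorem descartes_interpolation (n : ℕ) (hn : 2 ≤ n)
    (γ : Fin n → ℝ) (hγ : StrictMono γ)
    (r : Fin (n - 1) → ℝ) (hr : StrictMono r) :
    ∃ a : Fin n → ℝ,
      (∀ i, a i ≠ 0) ∧
      (∀ i j : Fin n, (j : ℕ) = (i : ℕ) + 1 → a i * a j < 0) ∧
      (∀ i : Fin (n - 1), (∑ k, a k * Real.exp (γ k * r i)) = 0) ∧
      ∃ ε : ℝ, (ε = 1 ∨ ε = -1) ∧
        ∀ x : ℝ, x ∉ Set.range r →
          0 < ε * (-1 : ℝ) ^ ((univ.filter fun i => r i < x).card) *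
            (∑ k, a k * Real.exp (γ k * x)) := by
  obtain ⟨m, rfl⟩ : ∃ m, n = m + 1 := ⟨n - 1, by omega⟩
  exact (descartes_interpolation_general (isDescartesSystem_exp hγ) hr).imp
    fun a ⟨ha, halt, hzero, hsign⟩ => ⟨ha, halt, hzero, 1, .inl rfl, by simpa using hsign⟩
end

section
/- Let 0 < λ₁ and 2λ₁ ≤ λ₂, let u₁, u₂ ≥ 0 and c, w₁, w₂ ∈ ℝ, define l(x) = u₂e^{−2λ₂x} + c·e^{−(λ₁+λ₂)x} + w₂e^{−λ₂x} + u₁e^{−2λ₁x} + w₁e^{−λ₁x}, and define m(x) := x⁻² ∫₀ˣ y·l(y) dy for x > 0. Then for q ∈ {l, m} there do not exist points 0 < x₁ < x₂ < x₃ < x₄ with q(x₁) < 0, q(x₂) > 0, q(x₃) < 0, and q(x₄) > 0. -/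
open MeasureTheory intervalIntegral

/-!
With `λ₁, λ₂` the mean-reversion rates, the exponents `-2λ₂ < -(λ₁+λ₂) < -λ₂ ≤ -2λ₁ < -λ₁` carry the
coefficients `u₂, c, w₂, u₁, w₁`. Descartes' rule of signs for exponential sums says that an
alternating sign pattern of the values is also a pattern of the coefficients, read in the order of
the exponents. In `(−, +, −, +)` the second `−` is followed by a `+`, so it cannot be `w₁`; as `u₁`
and `u₂` are nonnegative, the two `−` must be `c` and `w₂`, and these are adjacent. The yield curve
is reduced to the forward curve because a primitive vanishing at `0` has on `(0, ∞)` no sign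
pattern that its derivative lacks.
-/

open Set Filter Topology

variable {ι : Type*} {k a : ι → ℝ} {s t : Set ι} {ε : ℝ} {n : ℕ}

/-- `a` takes `n` values of alternating strict signs, the first one with the sign of `ε`, at points
of `s` whose positions `k` strictly increase. For a function on the line, `k = id`; for the
coefficients of an exponential sum, `k` gives the exponents. -/
def Alternates (ε : ℝ) (k a : ι → ℝ) (s : Set ι) : ℕ → Prop
  | 0 => True
  | n + 1 => ∃ i ∈ s, 0 < ε * a i ∧ Alternates (-ε) k a {j ∈ s | k i < k j} n

namespace Alternates

variable {b w : ι → ℝ} {f F F' : ℝ → ℝ} {x : ℝ}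

lemma mono (h : Alternates ε k a s n) (hst : s ⊆ t) : Alternates ε k a t n := by
  induction n generalizing ε s t with
  | zero => trivial
  | succ n ih =>
    obtain ⟨i, hi, hai, htail⟩ := h
    exact ⟨i, hst hi, hai, ih htail fun _ hj => ⟨hst hj.1, hj.2⟩⟩

lemma of_eq_mul (h : Alternates ε k b s n) (hb : ∀ i ∈ s, b i = w i * a i)
    (hw : ∀ i ∈ s, 0 ≤ w i) : Alternates ε k a s n := by
  induction n generalizing ε s with
  | zero => trivial
  | succ n ih =>
    obtain ⟨i, hi, hbi, htail⟩ := h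
    rw [hb i hi, mul_left_comm] at hbi
    exact ⟨i, hi, pos_of_mul_pos_right hbi (hw i hi),
      ih htail (fun j hj => hb j hj.1) fun j hj => hw j hj.1⟩

lemma cons_deriv {y : ℝ} (hxy : x < y) (hF : ContinuousOn F (Icc x y))
    (hF' : ∀ z ∈ Ioo x y, HasDerivAt F (F' z) z) (hlt : ε * F x < ε * F y)
    (h : Alternates (-ε) id F' (Ioi y) n) : Alternates ε id F' (Ioi x) (n + 1) := by
  obtain ⟨z, hz, hslope⟩ := exists_hasDerivAt_eq_slope F F' hxy hF hF'
  refine ⟨z, hz.1, ?_, h.mono fun _ hv => ⟨hxy.trans hv, hz.2.trans hv⟩⟩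
  rw [hslope, ← mul_div_assoc, mul_sub]
  exact div_pos (sub_pos.2 hlt) (sub_pos.2 hxy)

lemma deriv_Ioi (h : Alternates ε id F (Ioi x) n) (hF : ContinuousOn F (Ici x))
    (hF' : ∀ y ∈ Ioi x, HasDerivAt F (F' y) y) (hx : ε * F x ≤ 0) :
    Alternates ε id F' (Ioi x) n := by
  induction n generalizing ε x with
  | zero => trivial
  | succ n ih =>
    obtain ⟨y, hxy, hy, htail⟩ := h
    rw [mem_Ioi] at hxy
    refine cons_deriv hxy (hF.mono Icc_subset_Ici_self) (fun z hz => hF' z hz.1) (hx.trans_lt hy) ?_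
    exact ih (htail.mono fun _ hz => hz.2) (hF.mono (Ici_subset_Ici.2 hxy.le))
      (fun z hz => hF' z (hxy.trans hz)) (by linarith)

lemma tail_deriv (h : Alternates ε id F univ (n + 1)) (hF' : ∀ x, HasDerivAt F (F' x) x) :
    ∃ x, 0 < ε * F x ∧ Alternates (-ε) id F' (Ioi x) n := by
  obtain ⟨x, -, hx, htail⟩ := h
  refine ⟨x, hx, ?_⟩
  exact (htail.mono fun _ hy => hy.2).deriv_Ioi (fun y _ => (hF' y).continuousAt.continuousWithinAt)
    (fun y _ => hF' y) (by simpa using hx.le)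

lemma deriv_of_tendsto_atBot {L : ℝ} (h : Alternates ε id F univ n)
    (hF' : ∀ x, HasDerivAt F (F' x) x) (hL : Tendsto F atBot (𝓝 L)) (hεL : ε * L ≤ 0) :
    Alternates ε id F' univ n := by
  cases n with
  | zero => trivial
  | succ n =>
    obtain ⟨x, hx, htail⟩ := h.tail_deriv hF'
    obtain ⟨y, hy, hyx⟩ := (((hL.const_mul ε).eventually_lt_const (hεL.trans_lt hx)).and
      (eventually_lt_atBot x)).exists
    exact (cons_deriv hyx (fun z _ => (hF' z).continuousAt.continuousWithinAt)
      (fun z _ => hF' z) hy htail).mono (subset_univ _)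

lemma of_integral (hf : Continuous f)
    (h : Alternates ε id (fun y => ∫ t in x..y, f t) (Ioi x) n) : Alternates ε id f (Ioi x) n := by
  have hderiv (y : ℝ) : HasDerivAt (fun y => ∫ t in x..y, f t) (f y) y :=
    (hf.integral_hasStrictDerivAt x y).hasDerivAt
  exact h.deriv_Ioi (fun y _ => (hderiv y).continuousAt.continuousWithinAt)
    (fun y _ => hderiv y) (by rw [integral_same, mul_zero])

end Alternates

/-- The exponential sum with coefficients `a` and exponents `k`, which need not be distinct. -/
noncomputable def expSum (s : Finset ι) (k a : ι → ℝ) (x : ℝ) : ℝ :=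
  ∑ i ∈ s, a i * Real.exp (k i * x)

namespace expSum

variable (s : Finset ι) (k a : ι → ℝ)

lemma eq_exp_mul (c x : ℝ) :
    expSum s k a x = Real.exp (c * x) * expSum s (fun i => k i - c) a x := by
  simp only [expSum, Finset.mul_sum]
  refine Finset.sum_congr rfl fun i _ => ?_
  rw [mul_left_comm, ← Real.exp_add]
  ring_nf

protected lemma hasDerivAt (x : ℝ) :
    HasDerivAt (expSum s k a) (expSum s k (fun i => k i * a i) x) x := by
  refine HasDerivAt.fun_sum fun i _ => ?_
  exact (((hasDerivAt_id x).const_mul (k i)).exp.const_mul (a i)).congr_deriv (by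
    simp only [id, mul_one]; ring)

protected lemma continuous : Continuous (expSum s k a) :=
  continuous_iff_continuousAt.2 fun x => (expSum.hasDerivAt s k a x).continuousAt

variable {s k}

lemma deriv_eq_exp_mul_filter {c : ℝ} (hc : ∀ i ∈ s, c ≤ k i) (x : ℝ) :
    expSum s (fun i => k i - c) (fun i => (k i - c) * a i) x =
      Real.exp (-(c * x)) * expSum {i ∈ s | c < k i} k (fun i => (k i - c) * a i) x := by
  have hdrop : expSum {i ∈ s | c < k i} (fun i => k i - c) (fun i => (k i - c) * a i) x =
      expSum s (fun i => k i - c) (fun i => (k i - c) * a i) x :=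
    Finset.sum_filter_of_ne fun i hi hne => (hc i hi).lt_of_ne fun heq => hne (by simp [heq])
  rw [← hdrop, eq_exp_mul _ k _ c, ← mul_assoc, ← Real.exp_add, neg_add_cancel, Real.exp_zero,
    one_mul]

lemma tendsto_atBot (hk : ∀ i ∈ s, 0 ≤ k i) :
    Tendsto (expSum s k a) atBot (𝓝 (∑ i ∈ s with k i = 0, a i)) := by
  rw [Finset.sum_filter]
  refine tendsto_finsetSum s fun i hi => ?_
  split_ifs with h
  · simp [h]
  · have hpos : 0 < k i := (hk i hi).lt_of_ne' h
    simpa using (Real.tendsto_exp_atBot.comp (tendsto_id.const_mul_atBot hpos)).const_mul (a i)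

end expSum

/-- **Descartes' rule of signs** for exponential sums. -/
theorem Alternates.of_expSum {s : Finset ι} (h : Alternates ε id (expSum s k a) univ n) :
    Alternates ε k a s n := by
  induction s using Finset.strongInduction generalizing a ε n with
  | H s ih =>
  obtain _ | n := n
  · trivial
  have hs : s.Nonempty := by
    obtain ⟨x, -, hx, -⟩ := h
    by_contra! hempty
    simp [hempty, expSum] at hx
  obtain ⟨i₀, hi₀, hmin⟩ := s.exists_min_image k hs
  set t : Finset ι := {i ∈ s | k i₀ < k i}
  have hts : t ⊂ s := Finset.filter_ssubset.2 ⟨i₀, hi₀, lt_irrefl _⟩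
  have descend {δ : ℝ} {m : ℕ} (hm : Alternates δ id
      (expSum s (fun i => k i - k i₀) fun i => (k i - k i₀) * a i) univ m) :
      Alternates δ k a t m := by
    have hexp := hm.of_eq_mul (fun x _ => expSum.deriv_eq_exp_mul_filter a hmin x)
      fun x _ => (Real.exp_pos _).le
    exact (ih t hts hexp).of_eq_mul (fun _ _ => rfl)
      fun i hi => sub_nonneg.2 (hmin i (hts.subset hi))
  have hquot : Alternates ε id (expSum s (fun i => k i - k i₀) a) univ (n + 1) :=
    h.of_eq_mul (fun x _ => expSum.eq_exp_mul s k a (k i₀) x) fun _ _ => (Real.exp_pos _).le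
  have hderiv := expSum.hasDerivAt s (fun i => k i - k i₀) a
  -- The limit of the quotient at `-∞` is the sum of the coefficients at the least exponent. If it
  -- has the sign of `ε`, then so has one of these coefficients, which supplies the first term of
  -- the pattern, the one that differentiation loses; otherwise differentiation loses nothing.
  by_cases hlead : 0 < ε * ∑ i ∈ s with k i - k i₀ = 0, a i
  · rw [Finset.mul_sum] at hlead
    obtain ⟨i, hi, hai⟩ := Finset.exists_lt_of_sum_lt (f := fun _ => (0 : ℝ)) (by simpa using hlead)
    rw [Finset.mem_filter, sub_eq_zero] at hi
    obtain ⟨x, -, htail⟩ := hquot.tail_deriv hderiv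
    refine ⟨i, hi.1, hai, (descend (htail.mono (subset_univ _))).mono fun j hj => ?_⟩
    rw [Finset.mem_coe, Finset.mem_filter] at hj
    exact ⟨hj.1, hi.2.trans_lt hj.2⟩
  · have hlim := expSum.tendsto_atBot (k := fun i => k i - k i₀) a
      fun i hi => sub_nonneg.2 (hmin i hi)
    exact (descend (hquot.deriv_of_tendsto_atBot hderiv hlim (not_lt.1 hlead))).mono hts.subset

theorem not_alternates_expSum_of_scale_separated {p r u₁ u₂ : ℝ} (hp : 0 ≤ p) (hpr : 2 * p ≤ r)
    (hu₁ : 0 ≤ u₁) (hu₂ : 0 ≤ u₂) (c w₁ w₂ : ℝ) :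
    ¬ Alternates (-1) id
      (expSum Finset.univ ![-(2 * r), -(p + r), -r, -(2 * p), -p] ![u₂, c, w₂, u₁, w₁]) univ 4 := by
  intro h
  obtain ⟨i₁, -, ha₁, i₂, ⟨-, h₁₂⟩, -, i₃, ⟨-, h₂₃⟩, ha₃, i₄, ⟨-, h₃₄⟩, -⟩ := h.of_expSum
  set k : Fin 5 → ℝ := ![-(2 * r), -(p + r), -r, -(2 * p), -p]
  set a : Fin 5 → ℝ := ![u₂, c, w₂, u₁, w₁]
  have le_max (i : Fin 5) : k i ≤ -p := by
    fin_cases i <;> simp only [k, Fin.reduceFinMk, Matrix.cons_val] <;> linarith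
  have gap (i : Fin 5) : k i ≤ -(p + r) ∨ -r ≤ k i := by
    fin_cases i <;> simp only [k, Fin.reduceFinMk, Matrix.cons_val] <;> grind
  have eq_of_neg {i : Fin 5} (hi : a i < 0) : k i = -(p + r) ∨ k i = -r ∨ k i = -p := by
    fin_cases i <;> simp only [k, a, Fin.reduceFinMk, Matrix.cons_val] at hi ⊢ <;> grind
  have hi₁ : -(p + r) ≤ k i₁ := by
    rcases eq_of_neg (i := i₁) (by linarith) with h | h | h <;> linarith
  have hi₃ : k i₃ ≤ -r := by
    rcases eq_of_neg (i := i₃) (by linarith) with h | h | h <;> linarith [le_max i₄]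
  rcases gap i₂ with h | h <;> linarith

/-- Scale-separated (or critical) case, any correlation: the sign pattern
`(−, +, −, +)` is impossible for the derivatives of forward and yield curve. -/
theorem no_minus_plus_minus_plus_sep
    (lam1 lam2 : ℝ) (h1 : 0 < lam1) (h2 : 2 * lam1 ≤ lam2)
    (u1 u2 : ℝ) (hu1 : 0 ≤ u1) (hu2 : 0 ≤ u2) (c w1 w2 : ℝ)
    (l m : ℝ → ℝ)
    (hl : ∀ x : ℝ, l x = u2 * Real.exp (-(2 * lam2 * x)) +
        c * Real.exp (-((lam1 + lam2) * x)) + w2 * Real.exp (-(lam2 * x)) +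
        u1 * Real.exp (-(2 * lam1 * x)) + w1 * Real.exp (-(lam1 * x)))
    (hm : ∀ x : ℝ, 0 < x → m x = (x ^ 2)⁻¹ * ∫ t in (0 : ℝ)..x, t * l t) :
    ∀ q : ℝ → ℝ, (q = l ∨ q = m) →
      ¬ ∃ x1 x2 x3 x4 : ℝ, 0 < x1 ∧ x1 < x2 ∧ x2 < x3 ∧ x3 < x4 ∧
        q x1 < 0 ∧ 0 < q x2 ∧ q x3 < 0 ∧ 0 < q x4 := by
  have hsum : l = expSum Finset.univ
      ![-(2 * lam2), -(lam1 + lam2), -lam2, -(2 * lam1), -lam1] ![u2, c, w2, u1, w1] := by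
    ext x
    simp [hl, expSum, Fin.sum_univ_five, -neg_add_rev]
  have hforward : ¬ Alternates (-1) id l (Ioi 0) 4 := fun h =>
    not_alternates_expSum_of_scale_separated h1.le h2 hu1 hu2 c w1 w2
      (hsum ▸ h.mono (subset_univ _))
  have hyield (h : Alternates (-1) id m (Ioi 0) 4) : Alternates (-1) id l (Ioi 0) 4 := by
    have hcont : Continuous l := hsum ▸ expSum.continuous _ _ _
    have hintegral := h.of_eq_mul (fun x hx => hm x hx) fun x _ => inv_nonneg.2 (sq_nonneg x)
    exact (hintegral.of_integral (by fun_prop)).of_eq_mul (fun _ _ => rfl) fun _ hx => le_of_lt hx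
  rintro q hq ⟨x1, x2, x3, x4, hx1, h12, h23, h34, hq1, hq2, hq3, hq4⟩
  have hpattern : Alternates (-1) id q (Ioi 0) 4 := by
    have h13 := h12.trans h23
    have hx4 := hx1.trans (h13.trans h34)
    refine ⟨x1, hx1, ?_, x2, ⟨hx1.trans h12, h12⟩, ?_, x3, ⟨⟨hx1.trans h13, h13⟩, h23⟩, ?_,
      x4, ⟨⟨⟨hx4, h13.trans h34⟩, h23.trans h34⟩, h34⟩, ?_, trivial⟩ <;> simpa
  rcases hq with rfl | rfl
  exacts [hforward hpattern, hforward (hyield hpattern)]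
end

section
/- Let 0 < λ₁, 2λ₁ < λ₂, and 0 < r₁ < r₂. Then there exist u₁ > 0 and w₁ < 0, w₂ < 0 such that the function l(x) := w₂·e^{−λ₂x} + u₁·e^{−2λ₁x} + w₁·e^{−λ₁x} satisfies: l(x) < 0 for 0 ≤ x < r₁, l(r₁) = 0, l(x) > 0 for r₁ < x < r₂, l(r₂) = 0, and l(x) < 0 for x > r₂. -/
/-!
Dividing `l` by its middle exponential leaves `u - h`, where `h` is a positive combination of a
decreasing and an increasing exponential. As these vary in opposite directions between `r₁` and
`r₂`, the two weights can be balanced so that `h r₁ = h r₂`; call this common value `u`. Then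
`u - h` is strictly concave and vanishes at `r₁` and `r₂`, which forces the sign pattern.
-/

/-- The sign pattern `(−, +, −)` with zeros at `r₁` and `r₂`: if `l` is the derivative of a forward
curve, the curve has a dip at `r₁` followed by a hump at `r₂`. The pattern is imposed on the whole
domain, without restriction to nonnegative arguments. -/
structure IsDipHumpDeriv {α β : Type*} [LT α] [LT β] [Zero β] (l : α → β) (r₁ r₂ : α) : Prop where
  neg_of_lt ⦃x : α⦄ : x < r₁ → l x < 0
  left_eq_zero : l r₁ = 0
  pos_of_lt_of_lt ⦃x : α⦄ : r₁ < x → x < r₂ → 0 < l x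
  right_eq_zero : l r₂ = 0
  neg_of_gt ⦃x : α⦄ : r₂ < x → l x < 0

namespace IsDipHumpDeriv

lemma of_strictConcaveOn {𝕜 β : Type*} [Field 𝕜] [LinearOrder 𝕜] [IsStrictOrderedRing 𝕜]
    [AddCommMonoid β] [LinearOrder β] [IsOrderedAddMonoid β] [Module 𝕜 β] [PosSMulStrictMono 𝕜 β]
    {f : 𝕜 → β} {r₁ r₂ : 𝕜} (hf : StrictConcaveOn 𝕜 Set.univ f) (hr : r₁ < r₂)
    (h₁ : f r₁ = 0) (h₂ : f r₂ = 0) : IsDipHumpDeriv f r₁ r₂ := by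
  have min_lt {x y z : 𝕜} (hxy : x < y) (hyz : y < z) : min (f x) (f z) < f y :=
    hf.lt_on_openSegment (Set.mem_univ x) (Set.mem_univ z) (hxy.trans hyz).ne
      (openSegment_eq_Ioo (hxy.trans hyz) ▸ ⟨hxy, hyz⟩)
  refine ⟨fun x hx ↦ ?_, h₁, fun x hx₁ hx₂ ↦ ?_, h₂, fun x hx ↦ ?_⟩
  · simpa [h₁, h₂] using min_lt hx hr
  · simpa [h₁, h₂] using min_lt hx₁ hx₂
  · simpa [h₁, h₂] using min_lt hr hx

lemma pos_mul {α β : Type*} [LT α] [MulZeroClass β] [Preorder β] [PosMulStrictMono β]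
    {f g : α → β} {r₁ r₂ : α} (hg : IsDipHumpDeriv g r₁ r₂) (hf : ∀ x, 0 < f x) :
    IsDipHumpDeriv (fun x ↦ f x * g x) r₁ r₂ where
  neg_of_lt x hx := mul_neg_of_pos_of_neg (hf x) (hg.neg_of_lt hx)
  left_eq_zero := mul_eq_zero_of_right _ hg.left_eq_zero
  pos_of_lt_of_lt x hx₁ hx₂ := mul_pos (hf x) (hg.pos_of_lt_of_lt hx₁ hx₂)
  right_eq_zero := mul_eq_zero_of_right _ hg.right_eq_zero
  neg_of_gt x hx := mul_neg_of_pos_of_neg (hf x) (hg.neg_of_gt hx)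

end IsDipHumpDeriv

lemma strictConvexOn_const_smul {𝕜 E β : Type*} [CommSemiring 𝕜] [PartialOrder 𝕜]
    [AddCommMonoid E] [SMul 𝕜 E] [AddCommMonoid β] [PartialOrder β] [Module 𝕜 β]
    [PosSMulStrictMono 𝕜 β] {s : Set E} {f : E → β} {c : 𝕜} (hc : 0 < c)
    (hf : StrictConvexOn 𝕜 s f) : StrictConvexOn 𝕜 s fun x ↦ c • f x :=
  ⟨hf.1, fun x hx y hy hxy a b ha hb hab ↦ by
    rw [smul_comm a c, smul_comm b c, ← smul_add]
    exact smul_lt_smul_of_pos_left (hf.2 hx hy hxy ha hb hab) hc⟩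

lemma strictConvexOn_exp_mul {k : ℝ} (hk : k ≠ 0) :
    StrictConvexOn ℝ Set.univ fun x ↦ Real.exp (k * x) :=
  ⟨convex_univ, fun x _ y _ hxy a b ha hb hab ↦ by
    simpa only [smul_eq_mul, mul_add, mul_left_comm k] using
      strictConvexOn_exp.2 (Set.mem_univ (k * x)) (Set.mem_univ (k * y))
        ((mul_right_injective₀ hk).ne hxy) ha hb hab⟩

lemma exists_pos_combination_eq {R : Type*} [CommRing R] [PartialOrder R] [IsOrderedRing R]
    {f₁ f₂ g₁ g₂ : R} (hf : f₂ < f₁) (hg : g₁ < g₂) :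
    ∃ p q : R, 0 < p ∧ 0 < q ∧ p * f₁ + q * g₁ = p * f₂ + q * g₂ :=
  ⟨g₂ - g₁, f₁ - f₂, sub_pos.2 hg, sub_pos.2 hf, by ring⟩

lemma exists_isDipHumpDeriv_sub_exp {k m r₁ r₂ : ℝ} (hk : k < 0) (hm : 0 < m) (hr : r₁ < r₂) :
    ∃ u p q : ℝ, 0 < u ∧ 0 < p ∧ 0 < q ∧
      IsDipHumpDeriv (fun x ↦ u - (p * Real.exp (k * x) + q * Real.exp (m * x))) r₁ r₂ := by
  have h_decreasing : Real.exp (k * r₂) < Real.exp (k * r₁) :=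
    Real.exp_lt_exp.2 (mul_lt_mul_of_neg_left hr hk)
  have h_increasing : Real.exp (m * r₁) < Real.exp (m * r₂) :=
    Real.exp_lt_exp.2 (mul_lt_mul_of_pos_left hr hm)
  obtain ⟨p, q, hp, hq, h_balanced⟩ := exists_pos_combination_eq h_decreasing h_increasing
  have h_convex : StrictConvexOn ℝ Set.univ
      fun x ↦ p * Real.exp (k * x) + q * Real.exp (m * x) :=
    (strictConvexOn_const_smul hp (strictConvexOn_exp_mul hk.ne)).add
      (strictConvexOn_const_smul hq (strictConvexOn_exp_mul hm.ne'))
  exact ⟨p * Real.exp (k * r₁) + q * Real.exp (m * r₁), p, q, by positivity, hp, hq,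
    .of_strictConcaveOn ((concaveOn_const _ convex_univ).sub_strictConvexOn h_convex) hr
      (sub_self _) (sub_eq_zero.2 h_balanced)⟩

theorem DH_strongly_attainable_general {a b c r₁ r₂ : ℝ} (hab : a < b) (hbc : b < c)
    (hr : r₁ < r₂) :
    ∃ u w₁ w₂ : ℝ, 0 < u ∧ w₁ < 0 ∧ w₂ < 0 ∧
      IsDipHumpDeriv (fun x ↦ w₂ * Real.exp (-(c * x)) + u * Real.exp (-(b * x)) +
        w₁ * Real.exp (-(a * x))) r₁ r₂ := by
  obtain ⟨u, p, q, hu, hp, hq, h⟩ :=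
    exists_isDipHumpDeriv_sub_exp (sub_neg.2 hbc) (sub_pos.2 hab) hr
  refine ⟨u, -q, -p, hu, neg_neg_of_pos hq, neg_neg_of_pos hp, ?_⟩
  have exp_factor (d x : ℝ) :
      Real.exp (-(d * x)) = Real.exp (-(b * x)) * Real.exp ((b - d) * x) := by
    rw [← Real.exp_add]
    ring_nf
  have factorization :
      (fun x ↦ -p * Real.exp (-(c * x)) + u * Real.exp (-(b * x)) + -q * Real.exp (-(a * x))) =
        fun x ↦ Real.exp (-(b * x)) *
          (u - (p * Real.exp ((b - c) * x) + q * Real.exp ((b - a) * x))) := by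
    funext x
    rw [exp_factor c, exp_factor a]
    ring
  exact factorization ▸ h.pos_mul fun x ↦ Real.exp_pos (-(b * x))

/-- The dip-hump shape `DH` is strongly attainable in the scale-separated case
`2λ₁ < λ₂`: there are `u₁ > 0` and `w₁, w₂ < 0` such that
`l(x) = w₂ e^{−λ₂x} + u₁ e^{−2λ₁x} + w₁ e^{−λ₁x}` has sign pattern `(−, +, −)`
with zeros exactly at the prescribed `r₁ < r₂`. -/
theorem DH_strongly_attainable (lam1 lam2 r1 r2 : ℝ)
    (h1 : 0 < lam1) (h2 : 2 * lam1 < lam2) (hr1 : 0 < r1) (hr12 : r1 < r2) :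
    ∃ u1 w1 w2 : ℝ, 0 < u1 ∧ w1 < 0 ∧ w2 < 0 ∧
      ∃ l : ℝ → ℝ,
        (∀ x : ℝ, l x = w2 * Real.exp (-(lam2 * x)) +
          u1 * Real.exp (-(2 * lam1 * x)) + w1 * Real.exp (-(lam1 * x))) ∧
        (∀ x : ℝ, 0 ≤ x → x < r1 → l x < 0) ∧
        l r1 = 0 ∧
        (∀ x : ℝ, r1 < x → x < r2 → 0 < l x) ∧
        l r2 = 0 ∧
        (∀ x : ℝ, r2 < x → l x < 0) := by
  obtain ⟨u, w₁, w₂, hu, hw₁, hw₂, h⟩ :=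
    DH_strongly_attainable_general (lt_two_mul_self h1) h2 hr12
  exact ⟨u, w₁, w₂, hu, hw₁, hw₂, _, fun _ ↦ rfl, fun _ _ hx ↦ h.neg_of_lt hx, h.left_eq_zero,
    h.pos_of_lt_of_lt, h.right_eq_zero, h.neg_of_gt⟩
end
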